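/- arXiv:1703.10681 — 2 statements merged into one kernel-verified Lean document; each statement's English description precedes it below -/
import Mathlib

section
/- Suppose the oracle O satisfies: (i) O(b, A') depends only on the restriction of the bid vector b to A', and (ii) O(b, A') ≤ opt_b(A', B) for every bid vector b and every A' ⊆ A. Let S = Greedy-OM(1/2, c) with respect to the true costs c, and for each winner i ∈ S let p_i = sup{ β > 0 : i ∈ Greedy-OM(1/2, (β, c_{−i})) } be its threshold payment. Then Σ_{i∈S} p_i ≤ B; that is, the mechanism Greedy-OM(1/2) with threshold payments is budget feasible. -/
open Classical

/-- Marginal value `m_i(S) = v(S ∪ {i}) - v(S)`. -/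
noncomputable def marg {ι : Type*} [DecidableEq ι] (v : Finset ι → ℝ) (S : Finset ι) (i : ι) : ℝ :=
  v (insert i S) - v S

/-- The next agent in the greedy order once the set `S` has been selected:
an agent of `Sᶜ` maximizing marginal value over bid, ties broken by the fixed linear order. -/
noncomputable def pick {ι : Type*} [Fintype ι] [LinearOrder ι] [Nonempty ι]
    (v : Finset ι → ℝ) (b : ι → ℝ) (S : Finset ι) : ι :=
  if h : Sᶜ.Nonempty then
    (Sᶜ.filter fun j => ∀ j' ∈ Sᶜ, marg v S j' / b j' ≤ marg v S j / b j).min'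
      (by
        obtain ⟨j, hj, hmax⟩ := Finset.exists_max_image Sᶜ (fun j => marg v S j / b j) h
        exact ⟨j, Finset.mem_filter.mpr ⟨hj, hmax⟩⟩)
  else Classical.arbitrary ι

/-- `greedySet v b t` is the set `S_t` of the first `t` agents in the greedy order
computed with respect to the bid vector `b`. -/
noncomputable def greedySet {ι : Type*} [Fintype ι] [LinearOrder ι] [Nonempty ι]
    (v : Finset ι → ℝ) (b : ι → ℝ) : ℕ → Finset ι
  | 0 => ∅
  | t + 1 => insert (pick v b (greedySet v b t)) (greedySet v b t)

/-- `agent v b k` is the `k`-th agent `a_k` in the greedy order (1-indexed). -/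
noncomputable def agent {ι : Type*} [Fintype ι] [LinearOrder ι] [Nonempty ι]
    (v : Finset ι → ℝ) (b : ι → ℝ) (k : ℕ) : ι :=
  pick v b (greedySet v b (k - 1))

/-- `optVal v b B A'` is the maximum of `v S` over `S ⊆ A'` with `∑_{i ∈ S} b i ≤ B`. -/
noncomputable def optVal {ι : Type*} (v : Finset ι → ℝ) (b : ι → ℝ) (B : ℝ)
    (A' : Finset ι) : ℝ :=
  sSup (v '' {S : Finset ι | S ⊆ A' ∧ ∑ i ∈ S, b i ≤ B})

/-- The greedy threshold mechanism `Greedy-TM(γ, b)`: it outputs `S_{k-1}` where `k` is the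
least index with `b_{a_k} · v(S_k) > γ · B · m_{a_k}(S_{k-1})`, and all of `A` if no such `k`
exists. -/
noncomputable def greedyTM {ι : Type*} [Fintype ι] [LinearOrder ι] [Nonempty ι]
    (v : Finset ι → ℝ) (B γ : ℝ) (b : ι → ℝ) : Finset ι :=
  if h : ∃ k, (1 ≤ k ∧ k ≤ Fintype.card ι) ∧
      b (agent v b k) * v (greedySet v b k) >
        γ * B * marg v (greedySet v b (k - 1)) (agent v b k)
  then greedySet v b (Nat.find h - 1)
  else Finset.univ

/-- The exponential-time greedy oracle mechanism `Greedy-EOM(α, b)`: it outputs `S_{k-1}` where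
`k` is the least index with `v(S_k) > α · opt_b(A, B)`, and all of `A` if no such `k` exists. -/
noncomputable def greedyEOM {ι : Type*} [Fintype ι] [LinearOrder ι] [Nonempty ι]
    (v : Finset ι → ℝ) (B α : ℝ) (b : ι → ℝ) : Finset ι :=
  if h : ∃ k, (1 ≤ k ∧ k ≤ Fintype.card ι) ∧
      v (greedySet v b k) > α * optVal v b B Finset.univ
  then greedySet v b (Nat.find h - 1)
  else Finset.univ

/-- The greedy oracle mechanism `Greedy-OM(α, b)` with oracle `O`: it outputs
`{ a_t : 1 ≤ t ≤ n, v(S_t) ≤ α · O(b, A \ {a_t}) }`. -/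
noncomputable def greedyOM {ι : Type*} [Fintype ι] [LinearOrder ι] [Nonempty ι]
    (v : Finset ι → ℝ) (O : (ι → ℝ) → Finset ι → ℝ) (α : ℝ) (b : ι → ℝ) : Finset ι :=
  ((Finset.Icc 1 (Fintype.card ι)).filter
      (fun t => v (greedySet v b t) ≤ α * O b (Finset.univ.erase (agent v b t)))).image
    (fun t => agent v b t)

/-- An allocation rule `f`, mapping bid vectors with positive entries to subsets of the agents,
is monotone if a winner remains a winner after lowering his bid. -/
def MonotoneAlloc {ι : Type*} [DecidableEq ι] (f : (ι → ℝ) → Finset ι) : Prop :=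
  ∀ b : ι → ℝ, (∀ j, 0 < b j) → ∀ i ∈ f b, ∀ β : ℝ, 0 < β → β ≤ b i →
    i ∈ f (Function.update b i β)

section helpers
variable {ι : Type*} [Fintype ι] [LinearOrder ι] [Nonempty ι]

lemma pick_spec (v : Finset ι → ℝ) (b : ι → ℝ) (S : Finset ι) (h : Sᶜ.Nonempty) :
    pick v b S ∉ S ∧ (∀ j ∉ S, marg v S j / b j ≤ marg v S (pick v b S) / b (pick v b S)) ∧
    (∀ j ∉ S, (∀ j' ∉ S, marg v S j' / b j' ≤ marg v S j / b j) → pick v b S ≤ j) := by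
  have hp : pick v b S ∈ (Sᶜ.filter fun j => ∀ j' ∈ Sᶜ, marg v S j' / b j' ≤ marg v S j / b j) := by
    unfold pick
    rw [dif_pos h]
    exact Finset.min'_mem _ _
  rw [Finset.mem_filter] at hp
  refine ⟨by simpa using hp.1, fun j hj => hp.2 j (by simpa using hj), fun j hj hmax => ?_⟩
  unfold pick
  rw [dif_pos h]
  apply Finset.min'_le
  rw [Finset.mem_filter]
  exact ⟨by simpa using hj, fun j' hj' => hmax j' (by simpa using hj')⟩

lemma pick_eq_of (v : Finset ι → ℝ) (b : ι → ℝ) (S : Finset ι) (j : ι) (hj : j ∉ S)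
    (h1 : ∀ j' ∉ S, marg v S j' / b j' ≤ marg v S j / b j)
    (h2 : ∀ j' ∉ S, marg v S j / b j ≤ marg v S j' / b j' → j ≤ j') : pick v b S = j := by
  obtain ⟨p1, p2, p3⟩ := pick_spec v b S ⟨j, by simpa using hj⟩
  exact le_antisymm (p3 j hj h1) (h2 _ p1 (p2 j hj))

lemma gs_mono (v : Finset ι → ℝ) (b : ι → ℝ) : Monotone (greedySet v b) :=
  monotone_nat_of_le_succ fun _ => Finset.subset_insert _ _

lemma gs_compl (v : Finset ι → ℝ) (b : ι → ℝ) (t : ℕ) (ht : t < Fintype.card ι) :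
    (greedySet v b t)ᶜ.Nonempty := by
  have hcard : ∀ t, (greedySet v b t).card ≤ t := by
    intro t
    induction t with
    | zero => simp [greedySet]
    | succ t ih => exact (Finset.card_insert_le _ _).trans (by omega)
  rw [← Finset.card_pos, Finset.card_compl]
  have := hcard t
  omega

lemma gs_full (v : Finset ι → ℝ) (b : ι → ℝ) (i : ι) :
    ∃ t ∈ Finset.Icc 1 (Fintype.card ι), agent v b t = i := by
  have hcard : ∀ t, t ≤ Fintype.card ι → (greedySet v b t).card = t := by
    intro t
    induction t with
    | zero => simp [greedySet]
    | succ t ih =>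
      intro ht
      have := ih (by omega)
      have h2 := (pick_spec v b _ (gs_compl v b t (by omega))).1
      simp only [greedySet]
      rw [Finset.card_insert_of_notMem h2, this]
  have hu : greedySet v b (Fintype.card ι) = Finset.univ := by
    rw [← Finset.card_eq_iff_eq_univ]; exact hcard _ le_rfl
  have hm : ∀ t, i ∈ greedySet v b t → ∃ s ∈ Finset.Icc 1 t, agent v b s = i := by
    intro t
    induction t with
    | zero => simp [greedySet]
    | succ t ih =>
      intro h
      simp only [greedySet, Finset.mem_insert] at h
      rcases h with h | h
      · exact ⟨t + 1, by simp, by simp [agent, h]⟩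
      · obtain ⟨s, hs, he⟩ := ih h
        exact ⟨s, by simp at hs ⊢; omega, he⟩
  exact hm _ (hu ▸ Finset.mem_univ i)

lemma gs_agent (v : Finset ι → ℝ) (b : ι → ℝ) (t : ℕ) (ht : 1 ≤ t) :
    greedySet v b t = insert (agent v b t) (greedySet v b (t - 1)) := by
  obtain ⟨t, rfl⟩ : ∃ s, t = s + 1 := ⟨t - 1, by omega⟩
  rfl

variable {v : Finset ι → ℝ}

lemma marg_nonneg' (hvmono : ∀ S T : Finset ι, S ⊆ T → v S ≤ v T) (S : Finset ι) (i : ι) :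
    0 ≤ marg v S i := sub_nonneg.2 (hvmono _ _ (Finset.subset_insert _ _))

lemma marg_anti (hvmono : ∀ S T : Finset ι, S ⊆ T → v S ≤ v T)
    (hvsub : ∀ S T : Finset ι, v (S ∪ T) + v (S ∩ T) ≤ v S + v T)
    {S T : Finset ι} (h : S ⊆ T) (i : ι) : marg v T i ≤ marg v S i := by
  by_cases hi : i ∈ T
  · have : marg v T i = 0 := by simp [marg, Finset.insert_eq_of_mem hi]
    rw [this]; exact marg_nonneg' hvmono S i
  · have h1 := hvsub (insert i S) T
    have h2 : insert i S ∪ T = insert i T := by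
      rw [Finset.insert_union, Finset.union_eq_right.2 h]
    have h3 : insert i S ∩ T = S := by
      rw [Finset.insert_inter_of_notMem hi, Finset.inter_eq_left.2 h]
    rw [h2, h3] at h1
    unfold marg; linarith

lemma union_le (hvmono : ∀ S T : Finset ι, S ⊆ T → v S ≤ v T)
    (hvsub : ∀ S T : Finset ι, v (S ∪ T) + v (S ∩ T) ≤ v S + v T)
    (T U : Finset ι) : v (T ∪ U) ≤ v T + ∑ j ∈ U, marg v T j := by
  induction U using Finset.induction_on with
  | empty => simp
  | insert a U ha ih =>
    rw [Finset.sum_insert ha, Finset.union_insert]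
    have := marg_anti hvmono hvsub (Finset.subset_union_left (s₁ := T) (s₂ := U)) a
    unfold marg at this ⊢
    unfold marg at ih
    linarith

lemma key (hvmono : ∀ S T : Finset ι, S ⊆ T → v S ≤ v T)
    (hvsub : ∀ S T : Finset ι, v (S ∪ T) + v (S ∩ T) ≤ v S + v T)
    {B β : ℝ} {c : ι → ℝ} (hc : ∀ i, 0 < c i) (hβ : 0 < β) (X S : Finset ι) (i : ι)
    (hX : ∑ j ∈ X, c j ≤ B)
    (hg : ∀ j ∉ S, j ≠ i → marg v S j * β ≤ marg v S i * c j) :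
    β * (v X - v (insert i S)) ≤ B * marg v S i := by
  have h1 := union_le hvmono hvsub (insert i S) X
  have h2 := hvmono X (insert i S ∪ X) Finset.subset_union_right
  have h0 := marg_nonneg' hvmono S i
  have h3 : β * ∑ j ∈ X, marg v (insert i S) j ≤ ∑ j ∈ X, marg v S i * c j := by
    rw [Finset.mul_sum]
    apply Finset.sum_le_sum
    intro j _
    by_cases hj : j ∈ insert i S
    · have : marg v (insert i S) j = 0 := by
        simp only [marg]; rw [Finset.insert_eq_of_mem hj, sub_self]
      rw [this, mul_zero]; exact mul_nonneg h0 (hc j).le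
    · simp only [Finset.mem_insert, not_or] at hj
      have a := marg_anti hvmono hvsub (Finset.subset_insert i S) j
      have := hg j hj.2 hj.1
      nlinarith
  rw [← Finset.mul_sum] at h3
  have h4 : β * (v X - v (insert i S)) ≤ β * ∑ j ∈ X, marg v (insert i S) j :=
    mul_le_mul_of_nonneg_left (by linarith) hβ.le
  nlinarith [mul_le_mul_of_nonneg_left hX h0]

lemma opt_attained (v : Finset ι → ℝ) (b : ι → ℝ) {B : ℝ} (hB : 0 < B) (A' : Finset ι) :
    ∃ X : Finset ι, ∑ j ∈ X, b j ≤ B ∧ X ⊆ A' ∧ v X = optVal v b B A' := by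
  have : optVal v b B A' ∈ (v '' {S : Finset ι | S ⊆ A' ∧ ∑ i ∈ S, b i ≤ B}) := by
    apply Set.Nonempty.csSup_mem
    · exact ⟨v ∅, ∅, by simp [hB.le], rfl⟩
    · exact Set.toFinite _
  obtain ⟨X, ⟨h1, h2⟩, h3⟩ := this
  exact ⟨X, h2, h1, h3⟩

lemma prefix_eq (hvmono : ∀ S T : Finset ι, S ⊆ T → v S ≤ v T)
    {c : ι → ℝ} (hc : ∀ i, 0 < c i) {t : ℕ} (ht : t ≤ Fintype.card ι)
    {i : ι} (hi : i ∉ greedySet v c t) {β : ℝ} (hβ : c i ≤ β) :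
    ∀ r ≤ t, greedySet v (Function.update c i β) r = greedySet v c r := by
  intro r
  induction r with
  | zero => intro _; rfl
  | succ r ih =>
    intro hr
    have ih' := ih (by omega)
    simp only [greedySet]
    rw [ih']
    congr 1
    have hne : pick v c (greedySet v c r) ≠ i := by
      rintro h
      apply hi
      apply gs_mono v c hr
      simp [greedySet, h]
    obtain ⟨p1, p2, p3⟩ := pick_spec v c _ (gs_compl v c r (by omega))
    set S := greedySet v c r
    have hle : ∀ j, marg v S j / Function.update c i β j ≤ marg v S j / c j := by
      intro j
      by_cases hj : j = i
      · subst hj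
        rw [Function.update_self]
        exact div_le_div_of_nonneg_left (marg_nonneg' hvmono _ _) (hc _) hβ
      · rw [Function.update_of_ne hj]
    apply pick_eq_of _ _ _ _ p1
    · intro j' hj'
      rw [Function.update_of_ne hne]
      exact (hle j').trans (p2 j' hj')
    · intro j' hj' h
      rw [Function.update_of_ne hne] at h
      exact p3 j' hj' fun k hk => (p2 k hk).trans (h.trans (hle j'))

lemma tele (v : Finset ι → ℝ) (hv0 : v (∅ : Finset ι) = 0) (c : ι → ℝ) (k : ℕ) :
    ∑ t ∈ Finset.Icc 1 k, marg v (greedySet v c (t - 1)) (agent v c t) = v (greedySet v c k) := by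
  induction k with
  | zero => simp [greedySet, hv0]
  | succ k ih =>
    rw [Finset.sum_Icc_succ_top (by omega), ih]
    simp [marg, greedySet, agent]

lemma main_bound (hvmono : ∀ S T : Finset ι, S ⊆ T → v S ≤ v T)
    (hvsub : ∀ S T : Finset ι, v (S ∪ T) + v (S ∩ T) ≤ v S + v T)
    {B : ℝ} (hB : 0 < B) {c : ι → ℝ} (hc : ∀ i, 0 < c i)
    (O : (ι → ℝ) → Finset ι → ℝ)
    (hO1 : ∀ (b b' : ι → ℝ) (A' : Finset ι), (∀ j ∈ A', b j = b' j) → O b A' = O b' A')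
    (hO2 : ∀ (b : ι → ℝ) (A' : Finset ι), O b A' ≤ optVal v b B A')
    {k t : ℕ} (hk : v (greedySet v c k) ≤ 1 / 2 * O c (Finset.univ.erase (agent v c k)))
    (ht1 : 1 ≤ t) (htn : t ≤ Fintype.card ι) {β : ℝ} (hβ : c (agent v c t) ≤ β)
    (hw : agent v c t ∈ greedyOM v O (1 / 2) (Function.update c (agent v c t) β)) :
    β * v (greedySet v c k) ≤ B * marg v (greedySet v c (t - 1)) (agent v c t) := by
  have hi : agent v c t ∉ greedySet v c (t - 1) :=
    (pick_spec v c _ (gs_compl v c (t - 1) (by omega))).1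
  set i := agent v c t with hidef
  have hβ0 : 0 < β := (hc i).trans_le hβ
  have hpre := prefix_eq hvmono hc (t := t - 1) (by omega) hi hβ
  simp only [greedyOM, Finset.mem_image, Finset.mem_filter, Finset.mem_Icc] at hw
  obtain ⟨s, ⟨⟨hs1, hsn⟩, hs⟩, hsi⟩ := hw
  rw [hsi] at hs
  have hins := gs_agent v (Function.update c i β) s hs1
  rw [hsi] at hins
  have hst : t ≤ s := by
    by_contra hlt
    apply hi
    apply gs_mono v c (show s ≤ t - 1 by omega)
    rw [← hpre s (by omega), hins]
    exact Finset.mem_insert_self _ _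
  obtain ⟨p1, p2, -⟩ := pick_spec v (Function.update c i β) _
    (gs_compl v (Function.update c i β) (s - 1) (by omega))
  change agent v (Function.update c i β) s ∉ _ at p1
  change ∀ j ∉ _, _ ≤ marg v _ (agent v (Function.update c i β) s) /
    Function.update c i β (agent v (Function.update c i β) s) at p2
  rw [hsi, Function.update_self] at p2
  rw [hsi] at p1
  have hsub : greedySet v c (t - 1) ⊆ greedySet v (Function.update c i β) (s - 1) := by
    rw [← hpre _ le_rfl]; exact gs_mono _ _ (by omega)
  rw [hins] at hs
  have hOeq : O (Function.update c i β) (Finset.univ.erase i) = O c (Finset.univ.erase i) := by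
    apply hO1
    intro j hj
    exact Function.update_of_ne (Finset.ne_of_mem_erase hj) _ _
  rw [hOeq] at hs
  set S := greedySet v (Function.update c i β) (s - 1)
  have hg : ∀ j ∉ S, j ≠ i → marg v S j * β ≤ marg v S i * c j := by
    intro j hj hji
    have := p2 j hj
    rw [Function.update_of_ne hji, div_le_div_iff₀ (hc j) hβ0] at this
    exact this
  have hm := marg_anti hvmono hvsub hsub i
  have fin : ∀ X : Finset ι, ∑ j ∈ X, c j ≤ B → v (greedySet v c k) ≤ v X - v (insert i S) →
      β * v (greedySet v c k) ≤ B * marg v (greedySet v c (t - 1)) i := by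
    intro X hX hle
    have := key hvmono hvsub hc hβ0 X S i hX hg
    exact (mul_le_mul_of_nonneg_left hle hβ0.le).trans
      (this.trans (mul_le_mul_of_nonneg_left hm hB.le))
  rcases le_total (v (greedySet v c k)) (v (insert i S)) with h | h
  · obtain ⟨X, hX, -, hXe⟩ := opt_attained v c hB (Finset.univ.erase i)
    have := hO2 c (Finset.univ.erase i)
    exact fin X hX (by linarith)
  · obtain ⟨X, hX, -, hXe⟩ := opt_attained v c hB (Finset.univ.erase (agent v c k))
    have := hO2 c (Finset.univ.erase (agent v c k))
    exact fin X hX (by linarith)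

end helpers

/-- `Greedy-OM(1/2)` with threshold payments is budget feasible
(Lemma 4.7). -/
theorem greedyOM_budget_feasible {ι : Type*} [Fintype ι] [LinearOrder ι] [Nonempty ι]
    (v : Finset ι → ℝ) (hv0 : v (∅ : Finset ι) = 0)
    (hvmono : ∀ S T : Finset ι, S ⊆ T → v S ≤ v T)
    (hvsub : ∀ S T : Finset ι, v (S ∪ T) + v (S ∩ T) ≤ v S + v T)
    (B : ℝ) (hB : 0 < B)
    (c : ι → ℝ) (hc : ∀ i, 0 < c i) (hcB : ∀ i, c i ≤ B)
    (O : (ι → ℝ) → Finset ι → ℝ)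
    (hO1 : ∀ (b b' : ι → ℝ) (A' : Finset ι), (∀ j ∈ A', b j = b' j) → O b A' = O b' A')
    (hO2 : ∀ (b : ι → ℝ) (A' : Finset ι), O b A' ≤ optVal v b B A') :
    ∑ i ∈ greedyOM v O (1 / 2) c,
      sSup {β : ℝ | 0 < β ∧ i ∈ greedyOM v O (1 / 2) (Function.update c i β)} ≤ B := by
  set F := (Finset.Icc 1 (Fintype.card ι)).filter
      (fun t => v (greedySet v c t) ≤ 1 / 2 * O c (Finset.univ.erase (agent v c t))) with hF
  have hWdef : greedyOM v O (1 / 2) c = F.image (fun t => agent v c t) := rfl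
  set P : ι → ℝ := fun i =>
    sSup {β : ℝ | 0 < β ∧ i ∈ greedyOM v O (1 / 2) (Function.update c i β)} with hP
  have hP0 : ∀ i, 0 ≤ P i := fun i => Real.sSup_nonneg fun β hβ => hβ.1.le
  change ∑ i ∈ greedyOM v O (1 / 2) c, P i ≤ B
  rcases F.eq_empty_or_nonempty with hE | hE
  · rw [hWdef, hE]; simpa using hB.le
  set k := F.max' hE with hkdef
  have hkF : k ∈ F := Finset.max'_mem _ _
  have hkF' := hkF
  rw [hF, Finset.mem_filter, Finset.mem_Icc] at hkF'
  obtain ⟨⟨hk1, hkn⟩, hk⟩ := hkF'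
  have hV0 : 0 ≤ v (greedySet v c k) := by
    rw [← hv0]; exact hvmono _ _ (Finset.empty_subset _)
  rcases hV0.eq_or_lt with hV | hV
  · -- degenerate case
    have hs : ∀ j, marg v ∅ j ≤ 0 := by
      intro j
      obtain ⟨p1, p2, -⟩ := pick_spec v c (greedySet v c 0)
        (gs_compl v c 0 Fintype.card_pos)
      have h1 : v (greedySet v c 1) ≤ 0 := by
        rw [hV]; exact hvmono _ _ (gs_mono v c hk1)
      have h2 : marg v (greedySet v c 0) (pick v c (greedySet v c 0)) ≤ 0 := by
        have : greedySet v c 1 = insert (pick v c (greedySet v c 0)) (greedySet v c 0) := rfl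
        rw [marg, ← this]
        simp only [greedySet] at h1 ⊢
        linarith
      have h3 := (p2 j (by simp [greedySet])).trans
        (div_nonpos_of_nonpos_of_nonneg h2 (hc _).le)
      rw [div_le_iff₀ (hc j)] at h3
      simpa [greedySet] using h3
    have hz : ∀ T, v T = 0 := by
      intro T
      have h1 := union_le hvmono hvsub ∅ T
      have h2 : ∑ j ∈ T, marg v ∅ j ≤ 0 := Finset.sum_nonpos fun j _ => hs j
      have h3 := hvmono ∅ T (Finset.empty_subset _)
      rw [Finset.empty_union] at h1
      linarith
    have hPz : ∀ i ∈ greedyOM v O (1 / 2) c, P i = 0 := by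
      intro i hi
      apply Real.sSup_of_not_bddAbove
      rintro ⟨M, hM⟩
      have hmem : max M 0 + 1 ∈
          {β : ℝ | 0 < β ∧ i ∈ greedyOM v O (1 / 2) (Function.update c i β)} := by
        refine ⟨by positivity, ?_⟩
        simp only [greedyOM, Finset.mem_image, Finset.mem_filter] at hi ⊢
        obtain ⟨s, ⟨-, hs⟩, hsi⟩ := hi
        rw [hsi] at hs
        obtain ⟨r, hr, hri⟩ := gs_full v (Function.update c i (max M 0 + 1)) i
        refine ⟨r, ⟨hr, ?_⟩, hri⟩
        rw [hri, hz, hO1 _ c]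
        · rw [hz] at hs; exact hs
        · intro j hj
          exact Function.update_of_ne (Finset.ne_of_mem_erase hj) _ _
      have := hM hmem
      have := le_max_left M 0
      linarith
    rw [Finset.sum_eq_zero hPz]
    exact hB.le
  · have hPb : ∀ t ∈ F, P (agent v c t) ≤
        B / v (greedySet v c k) * marg v (greedySet v c (t - 1)) (agent v c t) := by
      intro t ht
      have ht' := ht
      rw [hF, Finset.mem_filter, Finset.mem_Icc] at ht'
      obtain ⟨⟨ht1, htn⟩, -⟩ := ht'
      have hwin : agent v c t ∈ greedyOM v O (1 / 2) c := by
        rw [hWdef]; exact Finset.mem_image_of_mem _ ht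
      have hcb := main_bound hvmono hvsub hB hc O hO1 hO2 hk ht1 htn le_rfl
        (by rw [Function.update_eq_self]; exact hwin)
      apply Real.sSup_le
      · rintro β ⟨hβ0, hβ⟩
        rw [div_mul_eq_mul_div, le_div_iff₀ hV]
        rcases le_total (c (agent v c t)) β with h | h
        · exact main_bound hvmono hvsub hB hc O hO1 hO2 hk ht1 htn h hβ
        · exact (mul_le_mul_of_nonneg_right h hV.le).trans hcb
      · exact mul_nonneg (div_nonneg hB.le hV.le) (marg_nonneg' hvmono _ _)
    calc ∑ i ∈ greedyOM v O (1 / 2) c, P i ≤ ∑ t ∈ F, P (agent v c t) := by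
          rw [hWdef]
          exact Finset.sum_image_le_of_nonneg (fun u _ => hP0 u)
      _ ≤ ∑ t ∈ F, B / v (greedySet v c k) * marg v (greedySet v c (t - 1)) (agent v c t) :=
          Finset.sum_le_sum hPb
      _ ≤ ∑ t ∈ Finset.Icc 1 k,
            B / v (greedySet v c k) * marg v (greedySet v c (t - 1)) (agent v c t) := by
          apply Finset.sum_le_sum_of_subset_of_nonneg
          · intro t ht
            have h1 := Finset.le_max' F t ht
            rw [hF, Finset.mem_filter, Finset.mem_Icc] at ht
            exact Finset.mem_Icc.2 ⟨ht.1.1, h1⟩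
          · intro t _ _
            exact mul_nonneg (div_nonneg hB.le hV.le) (marg_nonneg' hvmono _ _)
      _ = B := by
          rw [← Finset.mul_sum, tele v hv0 c k, div_mul_cancel₀ _ hV.ne']
end

section
/- Let r ≥ 1 and α, γ ∈ (0,1], and suppose the oracle O satisfies O(c, A') ≤ opt(A', B) ≤ r · O(c, A') for every A' ⊆ A. Let S = Greedy-OM(α, c) ∩ Greedy-TM(γ, c) with respect to the true costs c. Then at least one of the following two inequalities holds: (r/α) · v(S) + (1 + r/α) · v({i*}) ≥ opt(A, B), or (1 + 1/γ) · v(S) + (1/γ) · v({i*}) ≥ opt(A, B). (Hence, in the large-market limit where v({i*}) is negligible compared to opt(A, B), the mechanism Deterministic-Large(α, γ) has worst-case approximation ratio max(1 + 1/γ, r/α).) -/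
open Classical

theorem aux_pick {ι : Type*} [Fintype ι] [LinearOrder ι] [Nonempty ι]
    (v : Finset ι → ℝ) (b : ι → ℝ) (S : Finset ι) (h : Sᶜ.Nonempty) :
    pick v b S ∉ S ∧ ∀ j, j ∉ S → marg v S j / b j ≤ marg v S (pick v b S) / b (pick v b S) := by
  have key : pick v b S ∈
      (Sᶜ.filter fun j => ∀ j' ∈ Sᶜ, marg v S j' / b j' ≤ marg v S j / b j) := by
    unfold pick
    rw [dif_pos h]
    exact Finset.min'_mem _ _
  rw [Finset.mem_filter] at key
  exact ⟨by simpa using key.1, fun j hj => key.2 j (by simpa using hj)⟩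

theorem aux_card {ι : Type*} [Fintype ι] [LinearOrder ι] [Nonempty ι]
    (v : Finset ι → ℝ) (b : ι → ℝ) (t : ℕ) (ht : t ≤ Fintype.card ι) :
    (greedySet v b t).card = t := by
  induction t with
  | zero => simp [greedySet]
  | succ t ih =>
    have ih := ih (by omega)
    have h : (greedySet v b t)ᶜ.Nonempty := by
      rw [← Finset.card_pos, Finset.card_compl]; omega
    simp only [greedySet]
    rw [Finset.card_insert_of_notMem (aux_pick v b _ h).1, ih]

theorem aux_subset {ι : Type*} [Fintype ι] [LinearOrder ι] [Nonempty ι]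
    (v : Finset ι → ℝ) (b : ι → ℝ) (W : Finset ι) (t : ℕ)
    (h : ∀ s, 1 ≤ s → s ≤ t → agent v b s ∈ W) : greedySet v b t ⊆ W := by
  induction t with
  | zero => simp [greedySet]
  | succ t ih =>
    simp only [greedySet]
    apply Finset.insert_subset
    · exact h (t+1) (by omega) le_rfl
    · exact ih fun s h1 h2 => h s h1 (by omega)

theorem aux_mono {ι : Type*} [Fintype ι] [LinearOrder ι] [Nonempty ι]
    (v : Finset ι → ℝ) (b : ι → ℝ) : Monotone (greedySet v b) :=
  monotone_nat_of_le_succ fun t => by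
    simp only [greedySet]; exact Finset.subset_insert _ _

theorem aux_opt_mem {ι : Type*} [Fintype ι] (v : Finset ι → ℝ) (b : ι → ℝ) (B : ℝ) (hB : 0 < B)
    (A' : Finset ι) : ∃ S : Finset ι, S ⊆ A' ∧ ∑ i ∈ S, b i ≤ B ∧ v S = optVal v b B A' := by
  have hf : (v '' {S : Finset ι | S ⊆ A' ∧ ∑ i ∈ S, b i ≤ B}).Finite := (Set.toFinite _).image v
  have hn : (v '' {S : Finset ι | S ⊆ A' ∧ ∑ i ∈ S, b i ≤ B}).Nonempty :=
    ⟨v ∅, ∅, by simp [hB.le], rfl⟩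
  obtain ⟨S, hS, h⟩ := hn.csSup_mem hf
  exact ⟨S, hS.1, hS.2, h⟩

theorem aux_opt_le {ι : Type*} [Fintype ι] (v : Finset ι → ℝ) (b : ι → ℝ) (B : ℝ)
    (A' S : Finset ι) (h1 : S ⊆ A') (h2 : ∑ i ∈ S, b i ≤ B) : v S ≤ optVal v b B A' :=
  le_csSup ((Set.toFinite _).image v).bddAbove ⟨S, ⟨h1, h2⟩, rfl⟩

theorem aux_sum {ι : Type*} [DecidableEq ι] (v : Finset ι → ℝ)
    (hvsub : ∀ S T : Finset ι, v (S ∪ T) + v (S ∩ T) ≤ v S + v T) (S T : Finset ι)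
    (hd : Disjoint S T) :
    v (S ∪ T) ≤ v S + ∑ j ∈ T, marg v S j := by
  induction T using Finset.induction_on with
  | empty => simp
  | insert a T ha ih =>
    rw [Finset.disjoint_insert_right] at hd
    have ih := ih hd.2
    rw [Finset.sum_insert ha]
    have h := hvsub (S ∪ T) (insert a S)
    have e1 : (S ∪ T) ∪ insert a S = S ∪ insert a T := by ext; simp; tauto
    have e2 : (S ∪ T) ∩ insert a S = S := by
      ext x; simp only [Finset.mem_inter, Finset.mem_union, Finset.mem_insert]
      constructor
      · rintro ⟨h1, rfl | h2⟩
        · tauto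
        · exact h2
      · tauto
    rw [e1, e2] at h
    simp only [marg] at *
    linarith

theorem aux_ins {ι : Type*} [DecidableEq ι] (v : Finset ι → ℝ) (hv0 : v ∅ = 0)
    (hvmono : ∀ S T : Finset ι, S ⊆ T → v S ≤ v T)
    (hvsub : ∀ S T : Finset ι, v (S ∪ T) + v (S ∩ T) ≤ v S + v T) (S : Finset ι) (a : ι) :
    v (insert a S) ≤ v S + v {a} := by
  have h := hvsub {a} S
  have h2 := hvmono ∅ ({a} ∩ S) (Finset.empty_subset _)
  rw [← Finset.insert_eq] at h
  linarith

/-- the approximation guarantee of `Deterministic-Large(α, γ)`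
(Lemma 5.2): at least one of the two stated inequalities holds. -/
theorem deterministicLarge_approx {ι : Type*} [Fintype ι] [LinearOrder ι] [Nonempty ι]
    (v : Finset ι → ℝ) (hv0 : v (∅ : Finset ι) = 0)
    (hvmono : ∀ S T : Finset ι, S ⊆ T → v S ≤ v T)
    (hvsub : ∀ S T : Finset ι, v (S ∪ T) + v (S ∩ T) ≤ v S + v T)
    (B : ℝ) (hB : 0 < B)
    (c : ι → ℝ) (hc : ∀ i, 0 < c i) (hcB : ∀ i, c i ≤ B)
    (r : ℝ) (hr : 1 ≤ r)
    (α : ℝ) (hα0 : 0 < α) (hα1 : α ≤ 1)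
    (γ : ℝ) (hγ0 : 0 < γ) (hγ1 : γ ≤ 1)
    (O : (ι → ℝ) → Finset ι → ℝ)
    (hO : ∀ A' : Finset ι, O c A' ≤ optVal v c B A' ∧ optVal v c B A' ≤ r * O c A')
    (istar : ι) (histar : ∀ j : ι, v {j} ≤ v {istar}) :
    (r / α) * v (greedyOM v O α c ∩ greedyTM v B γ c) + (1 + r / α) * v {istar} ≥
        optVal v c B Finset.univ ∨
    (1 + 1 / γ) * v (greedyOM v O α c ∩ greedyTM v B γ c) + (1 / γ) * v {istar} ≥
        optVal v c B Finset.univ := by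
  have hTM : ∃ m, m ≤ Fintype.card ι ∧ greedyTM v B γ c = greedySet v c m ∧
      (m < Fintype.card ι → c (agent v c (m+1)) * v (greedySet v c (m+1)) >
        γ * B * marg v (greedySet v c m) (agent v c (m+1))) := by
    unfold greedyTM
    split_ifs with h
    · have hs := Nat.find_spec h
      have hp := hs.1.1
      have e : Nat.find h - 1 + 1 = Nat.find h := by omega
      refine ⟨Nat.find h - 1, by omega, rfl, fun _ => ?_⟩
      rw [e]
      exact hs.2
    · refine ⟨Fintype.card ι, le_rfl, ?_, fun h => absurd h (lt_irrefl _)⟩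
      exact ((Finset.card_eq_iff_eq_univ _).1 (aux_card v c _ le_rfl)).symm
  obtain ⟨m, hm, hTMe, hk⟩ := hTM
  obtain ⟨T, -, hTB, hTv⟩ := aux_opt_mem v c B hB Finset.univ
  rw [hTMe, ← hTv]
  have hi0 : 0 ≤ v {istar} := hv0 ▸ hvmono ∅ {istar} (Finset.empty_subset _)
  have hOM : ∀ s, 1 ≤ s → s ≤ m →
      v (greedySet v c s) ≤ α * O c (Finset.univ.erase (agent v c s)) →
      agent v c s ∈ greedyOM v O α c := by
    intro s h1 h2 h3
    unfold greedyOM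
    exact Finset.mem_image.2 ⟨s, Finset.mem_filter.2 ⟨Finset.mem_Icc.2 ⟨h1, h2.trans hm⟩, h3⟩, rfl⟩
  by_cases hex : ∃ t, (1 ≤ t ∧ t ≤ m) ∧
      α * O c (Finset.univ.erase (agent v c t)) < v (greedySet v c t)
  · left
    obtain ⟨⟨h1, h2⟩, h3⟩ := Nat.find_spec hex
    have hmin := fun s => Nat.find_min hex (m := s)
    generalize Nat.find hex = t at *
    obtain ⟨t, rfl⟩ : ∃ u, t = u + 1 := ⟨t - 1, by omega⟩
    have hsub : greedySet v c t ⊆ greedyOM v O α c ∩ greedySet v c m := by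
      apply Finset.subset_inter
      · apply aux_subset
        intro s hs1 hs2
        apply hOM s hs1 (by omega)
        by_contra hcon
        exact hmin s (by omega) ⟨⟨hs1, by omega⟩, not_le.1 hcon⟩
      · exact aux_mono v c (by omega)
    have hS := hvmono _ _ hsub
    have hstep : v (greedySet v c (t+1)) ≤ v (greedySet v c t) + v {agent v c (t+1)} :=
      aux_ins v hv0 hvmono hvsub _ _
    have ha := histar (agent v c (t+1))
    generalize agent v c (t+1) = a at *
    have hopt := (hO (Finset.univ.erase a)).2
    have hle : v (T.erase a) ≤ optVal v c B (Finset.univ.erase a) := by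
      apply aux_opt_le
      · exact Finset.erase_subset_erase _ (Finset.subset_univ _)
      · exact (Finset.sum_le_sum_of_subset_of_nonneg (Finset.erase_subset _ _)
          (fun i _ _ => (hc i).le)).trans hTB
    have hT : v T ≤ v (T.erase a) + v {a} :=
      (hvmono _ _ (Finset.insert_erase_subset a T)).trans (aux_ins v hv0 hvmono hvsub _ _)
    have hOlt : O c (Finset.univ.erase a) ≤
        (v (greedyOM v O α c ∩ greedySet v c m) + v {istar}) / α := by
      rw [le_div_iff₀ hα0]; linarith
    have := mul_le_mul_of_nonneg_left hOlt (by linarith : 0 ≤ r)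
    have e : r * ((v (greedyOM v O α c ∩ greedySet v c m) + v {istar}) / α) =
      (r / α) * v (greedyOM v O α c ∩ greedySet v c m) + (r / α) * v {istar} := by ring
    linarith
  · right
    push Not at hex
    have hsub : greedySet v c m ⊆ greedyOM v O α c :=
      aux_subset v c _ m fun s h1 h2 => hOM s h1 h2 (hex s ⟨h1, h2⟩)
    rw [Finset.inter_eq_right.2 hsub]
    have hS0 : 0 ≤ v (greedySet v c m) := hv0 ▸ hvmono ∅ _ (Finset.empty_subset _)
    have hγ' : 0 < 1 / γ := by positivity
    rcases hm.lt_or_eq with hlt | heq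
    · have hk := hk hlt
      have hne : (greedySet v c m)ᶜ.Nonempty := by
        rw [← Finset.card_pos, Finset.card_compl, aux_card v c m hm]; omega
      have hpk := (aux_pick v c _ hne).2
      have hstep : v (greedySet v c (m+1)) ≤ v (greedySet v c m) + v {agent v c (m+1)} :=
        aux_ins v hv0 hvmono hvsub _ _
      have hag : pick v c (greedySet v c m) = agent v c (m+1) := rfl
      rw [hag] at hpk
      have ha := histar (agent v c (m+1))
      have hm0 : 0 ≤ marg v (greedySet v c m) (agent v c (m+1)) :=
        sub_nonneg.2 (hvmono _ _ (Finset.subset_insert _ _))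
      have hca := hc (agent v c (m+1))
      generalize agent v c (m+1) = a at *
      have hsum := aux_sum v hvsub (greedySet v c m) (T \ greedySet v c m) Finset.disjoint_sdiff
      rw [Finset.union_sdiff_self_eq_union] at hsum
      have hT := hvmono T _ (Finset.subset_union_right (s₁ := greedySet v c m))
      set q := marg v (greedySet v c m) a / c a with hq
      have hq0 : 0 ≤ q := div_nonneg hm0 hca.le
      have h1 : ∑ j ∈ T \ greedySet v c m, marg v (greedySet v c m) j ≤ B * q := by
        calc _ ≤ ∑ j ∈ T \ greedySet v c m, c j * q := by
              apply Finset.sum_le_sum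
              intro j hj
              have := hpk j (Finset.mem_sdiff.1 hj).2
              rwa [div_le_iff₀' (hc j)] at this
          _ = (∑ j ∈ T \ greedySet v c m, c j) * q := by rw [Finset.sum_mul]
          _ ≤ B * q := by
              apply mul_le_mul_of_nonneg_right _ hq0
              exact (Finset.sum_le_sum_of_subset_of_nonneg Finset.sdiff_subset
                (fun i _ _ => (hc i).le)).trans hTB
      have h2 : B * q ≤ 1 / γ * (v (greedySet v c m) + v {istar}) := by
        have h3 : γ * (B * q) ≤ v (greedySet v c (m+1)) := by
          have : γ * (B * q) = γ * B * marg v (greedySet v c m) a / c a := by rw [hq]; ring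
          rw [this, div_le_iff₀' hca]
          exact hk.le
        rw [one_div, ← div_eq_inv_mul, le_div_iff₀ hγ0]
        linarith
      linarith
    · have hu : greedySet v c m = Finset.univ :=
        (Finset.card_eq_iff_eq_univ _).1 (by rw [aux_card v c m hm, heq])
      have hT : v T ≤ v (greedySet v c m) := hvmono _ _ (by rw [hu]; exact Finset.subset_univ _)
      have := mul_nonneg hγ'.le hS0
      have := mul_nonneg hγ'.le hi0
      linarith
end
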